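/- For every data path w with exactly k distinct data values, there exists a k-REM e_[w] such that L(e_[w]) = [w], the set of all data paths automorphic to w. -/

import Mathlib

/-- A data path `d₀ a₀ d₁ a₁ … a_{m−1} d_m`: a first data value followed by a
list of (letter, data value) pairs. -/
structure DataPath (A D : Type) where
  head : D
  tail : List (A × D)

namespace DataPath

/-- The last data value of a data path. -/
def lastVal {A D : Type} (w : DataPath A D) : D :=
  ((w.tail.getLast?).map Prod.snd).getD w.head

/-- Concatenation of data paths (meaningful when `w₁.lastVal = w₂.head`). -/
def comp {A D : Type} (w₁ w₂ : DataPath A D) : DataPath A D :=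
  ⟨w₁.head, w₁.tail ++ w₂.tail⟩

/-- Apply a map on data values to all data values of a data path. -/
def dmap {A D : Type} (π : D → D) (w : DataPath A D) : DataPath A D :=
  ⟨π w.head, w.tail.map (fun p => (p.1, π p.2))⟩

end DataPath

/-- Conditions over `k` registers. -/
inductive Cond (k : ℕ) where
  | top : Cond k
  | eq : Fin k → Cond k
  | ne : Fin k → Cond k
  | conj : Cond k → Cond k → Cond k
  | disj : Cond k → Cond k → Cond k
  | neg : Cond k → Cond k

/-- Satisfaction of a condition at data value `d` under assignment `τ`
(`none` is the empty register `⊥`, unequal to every data value). -/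
def CondSat {D : Type} {k : ℕ} (d : D) (τ : Fin k → Option D) : Cond k → Prop
  | .top => True
  | .eq i => τ i = some d
  | .ne i => τ i ≠ some d
  | .conj c₁ c₂ => CondSat d τ c₁ ∧ CondSat d τ c₂
  | .disj c₁ c₂ => CondSat d τ c₁ ∨ CondSat d τ c₂
  | .neg c => ¬ CondSat d τ c

/-- Regular expressions with memory over alphabet `A` with `k` registers. -/
inductive REM (A : Type) (k : ℕ) where
  | eps : REM A k
  | letter : A → REM A k
  | plus : REM A k → REM A k → REM A k
  | concat : REM A k → REM A k → REM A k
  | iter : REM A k → REM A k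
  | test : REM A k → Cond k → REM A k
  | bind : List (Fin k) → REM A k → REM A k

/-- Store `d` in each of the registers in `rs`. -/
def updReg {D : Type} {k : ℕ} (σ : Fin k → Option D) (rs : List (Fin k)) (d : D) :
    Fin k → Option D :=
  fun i => if i ∈ rs then some d else σ i

/-- The satisfaction relation `(e, w, σ) ⊢ σ'` of REMs on data paths. -/
inductive REMSat {A D : Type} {k : ℕ} :
    REM A k → DataPath A D → (Fin k → Option D) → (Fin k → Option D) → Prop
  | eps (d : D) (σ : Fin k → Option D) : REMSat .eps ⟨d, []⟩ σ σ
  | letter (a : A) (d₁ d₂ : D) (σ : Fin k → Option D) :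
      REMSat (.letter a) ⟨d₁, [(a, d₂)]⟩ σ σ
  | plusL {e₁ e₂ w σ σ'} : REMSat e₁ w σ σ' → REMSat (.plus e₁ e₂) w σ σ'
  | plusR {e₁ e₂ w σ σ'} : REMSat e₂ w σ σ' → REMSat (.plus e₁ e₂) w σ σ'
  | concat {e₁ e₂ w₁ w₂ σ σ₁ σ'} : w₁.lastVal = w₂.head →
      REMSat e₁ w₁ σ σ₁ → REMSat e₂ w₂ σ₁ σ' →
      REMSat (.concat e₁ e₂) (w₁.comp w₂) σ σ'
  | iterBase {e w σ σ'} : REMSat e w σ σ' → REMSat (.iter e) w σ σ'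
  | iterStep {e w₁ w₂ σ σ₁ σ'} : w₁.lastVal = w₂.head →
      REMSat e w₁ σ σ₁ → REMSat (.iter e) w₂ σ₁ σ' →
      REMSat (.iter e) (w₁.comp w₂) σ σ'
  | test {e c w σ σ'} : REMSat e w σ σ' → CondSat w.lastVal σ' c →
      REMSat (.test e c) w σ σ'
  | bind {rs e w σ σ'} : REMSat e w (updReg σ rs w.head) σ' →
      REMSat (.bind rs e) w σ σ'

/-- The language of a `k`-REM: data paths accepted starting from the empty
assignment `⊥^k`. -/
def REMLang {A D : Type} {k : ℕ} (e : REM A k) : Set (DataPath A D) :=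
  {w | ∃ σ' : Fin k → Option D, REMSat e w (fun _ => none) σ'}

/-- Regular expressions with equality over alphabet `A`. -/
inductive REE (A : Type) where
  | eps : REE A
  | letter : A → REE A
  | plus : REE A → REE A → REE A
  | concat : REE A → REE A → REE A
  | iter : REE A → REE A
  | eqTest : REE A → REE A
  | neTest : REE A → REE A

/-- The language of data paths of an REE. -/
inductive REELang {A D : Type} : REE A → DataPath A D → Prop
  | eps (d : D) : REELang .eps ⟨d, []⟩
  | letter (a : A) (d₁ d₂ : D) : REELang (.letter a) ⟨d₁, [(a, d₂)]⟩
  | plusL {e₁ e₂ w} : REELang e₁ w → REELang (.plus e₁ e₂) w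
  | plusR {e₁ e₂ w} : REELang e₂ w → REELang (.plus e₁ e₂) w
  | concat {e₁ e₂ w₁ w₂} : w₁.lastVal = w₂.head →
      REELang e₁ w₁ → REELang e₂ w₂ → REELang (.concat e₁ e₂) (w₁.comp w₂)
  | iterBase {e w} : REELang e w → REELang (.iter e) w
  | iterStep {e w₁ w₂} : w₁.lastVal = w₂.head →
      REELang e w₁ → REELang (.iter e) w₂ → REELang (.iter e) (w₁.comp w₂)
  | eqTest {e w} : REELang e w → w.head = w.lastVal → REELang (.eqTest e) w
  | neTest {e w} : REELang e w → w.head ≠ w.lastVal → REELang (.neTest e) w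

/-- A data graph: labeled edges over node type `V` and data values on nodes. -/
structure DataGraph (V A D : Type) where
  E : Set (V × A × V)
  ρ : V → D

/-- `Connects G u w v`: the data path `w` connects node `u` to node `v` in `G`. -/
inductive Connects {V A D : Type} (G : DataGraph V A D) : V → DataPath A D → V → Prop
  | nil (u : V) : Connects G u ⟨G.ρ u, []⟩ u
  | cons {u v x : V} {a : A} {t : List (A × D)} :
      (u, a, v) ∈ G.E → Connects G v ⟨G.ρ v, t⟩ x →
      Connects G u ⟨G.ρ u, (a, G.ρ v) :: t⟩ x

/-- A block `↓r̄.a[c]` of a basic REM. -/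
abbrev Block (A : Type) (k : ℕ) := List (Fin k) × A × Cond k

/-- The REM `↓r̄.a[c]` corresponding to a block. -/
def blockREM {A : Type} {k : ℕ} (b : Block A k) : REM A k :=
  .bind b.1 (.test (.letter b.2.1) b.2.2)

/-- The basic `k`-REM `↓r̄₁.a₁[c₁] · … · ↓r̄_m.a_m[c_m]` given by a list of blocks. -/
def basicREM {A : Type} {k : ℕ} : List (Block A k) → REM A k
  | [] => .eps
  | [b] => blockREM b
  | b :: bs => .concat (blockREM b) (basicREM bs)

/-- `e` is a `k`-REM witness for `(u, v)` in `S`: some data path in its language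
connects `u` to `v`, and every data path in its language only connects pairs in `S`. -/
def IsWitness {V A D : Type} {k : ℕ} (G : DataGraph V A D) (S : Set (V × V))
    (u v : V) (bs : List (Block A k)) : Prop :=
  (∃ w : DataPath A D, w ∈ REMLang (basicREM bs) ∧ Connects G u w v) ∧
  (∀ (u' v' : V) (w : DataPath A D),
      w ∈ REMLang (basicREM bs) → Connects G u' w v' → (u', v') ∈ S)

/-- A single transition of the `k`-assignment graph `T_G`, labeled by a block. -/
def AssignStep {V A D : Type} {k : ℕ} (G : DataGraph V A D) (b : Block A k)
    (s s' : V × (Fin k → Option D)) : Prop :=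
  (s.1, b.2.1, s'.1) ∈ G.E ∧ s'.2 = updReg s.2 b.1 (G.ρ s.1) ∧
    CondSat (G.ρ s'.1) s'.2 b.2.2

/-- A run in the `k`-assignment graph `T_G` along the blocks of a basic `k`-REM. -/
inductive AssignRun {V A D : Type} {k : ℕ} (G : DataGraph V A D) :
    List (Block A k) → V × (Fin k → Option D) → V × (Fin k → Option D) → Prop
  | nil (s : V × (Fin k → Option D)) : AssignRun G [] s s
  | cons {b bs s s' s''} : AssignStep G b s s' → AssignRun G bs s' s'' →
      AssignRun G (b :: bs) s s''

/-- The binary relation `S_e` defined by an REE `e` on a data graph `G`. -/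
def REEEval {V A D : Type} (G : DataGraph V A D) (e : REE A) : Set (V × V) :=
  {p : V × V | ∃ w : DataPath A D, REELang e w ∧ Connects G p.1 w p.2}

/-- Composition of binary relations. -/
def relComp {V : Type} (S₁ S₂ : Set (V × V)) : Set (V × V) :=
  {p : V × V | ∃ z : V, (p.1, z) ∈ S₁ ∧ (z, p.2) ∈ S₂}

/-- The `=`-restriction `S^=` of a relation. -/
def eqRes {V A D : Type} (G : DataGraph V A D) (S : Set (V × V)) : Set (V × V) :=
  {p ∈ S | G.ρ p.1 = G.ρ p.2}

/-- The `≠`-restriction `S^≠` of a relation. -/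
def neRes {V A D : Type} (G : DataGraph V A D) (S : Set (V × V)) : Set (V × V) :=
  {p ∈ S | G.ρ p.1 ≠ G.ρ p.2}

/-- Membership in the closure of a set `B` of binary relations under `+` (union)
and `∘` (composition). -/
inductive InClosure {V : Type} (B : Set (Set (V × V))) : Set (V × V) → Prop
  | base {S} : S ∈ B → InClosure B S
  | union {S₁ S₂} : InClosure B S₁ → InClosure B S₂ → InClosure B (S₁ ∪ S₂)
  | comp {S₁ S₂} : InClosure B S₁ → InClosure B S₂ → InClosure B (relComp S₁ S₂)

/-- The base set `B₀ = {S_ε} ∪ {S_a | a ∈ Σ}`. -/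
def B0 {V A D : Type} (G : DataGraph V A D) : Set (Set (V × V)) :=
  {S | S = REEEval G .eps ∨ ∃ a : A, S = REEEval G (.letter a)}

/-- The levels `L_i` of binary relations on a data graph. -/
def Level {V A D : Type} (G : DataGraph V A D) : ℕ → Set (Set (V × V))
  | 0 => {S | InClosure (B0 G) S}
  | i + 1 => {S | InClosure
      ((Level G i) ∪ (eqRes G '' (Level G i)) ∪ (neRes G '' (Level G i))) S}

/-- The identity relation (neutral element for composition). -/
def relId (V : Type) : Set (V × V) := {p : V × V | p.1 = p.2}

/-- `LabelConnects G u l v`: some path from `u` to `v` in `G` has label word `l`. -/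
inductive LabelConnects {V A D : Type} (G : DataGraph V A D) : V → List A → V → Prop
  | nil (u : V) : LabelConnects G u [] u
  | cons {u v x : V} {a : A} {l : List A} :
      (u, a, v) ∈ G.E → LabelConnects G v l x → LabelConnects G u (a :: l) x

/-- `q` is reachable from `p` in `G`. -/
def Reachable {V A D : Type} (G : DataGraph V A D) (p q : V) : Prop :=
  ∃ w : DataPath A D, Connects G p w q

/-- Data graph homomorphism: preserves labeled edges and, on reachable pairs,
preserves and reflects equality of data values. -/
def IsDGHom {V A D : Type} (G : DataGraph V A D) (h : V → V) : Prop :=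
  (∀ (p q : V) (a : A), (p, a, q) ∈ G.E → (h p, a, h q) ∈ G.E) ∧
  (∀ p q : V, Reachable G p q → (G.ρ p = G.ρ q ↔ G.ρ (h p) = G.ρ (h q)))

/-- A conjunctive regular data path query of arity `r`:
`Ans(z̄) := ⋀_i x_i →[e_i] y_i` where each `e_i` is an REM. -/
structure CRDPQ (A : Type) (r : ℕ) where
  nvars : ℕ
  m : ℕ
  src : Fin m → Fin nvars
  tgt : Fin m → Fin nvars
  nreg : Fin m → ℕ
  expr : (i : Fin m) → REM A (nreg i)
  out : Fin r → Fin nvars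

/-- The answer `Q(G)` of a CRDPQ on a data graph. -/
def CRDPQEval {V A D : Type} {r : ℕ} (G : DataGraph V A D) (Q : CRDPQ A r) :
    Set (Fin r → V) :=
  {t | ∃ μ : Fin Q.nvars → V,
        (∀ i : Fin Q.m, ∃ w : DataPath A D,
            w ∈ REMLang (Q.expr i) ∧ Connects G (μ (Q.src i)) w (μ (Q.tgt i))) ∧
        t = μ ∘ Q.out}

/-- `S` is definable by a union of conjunctive regular data path queries. -/
def UCRDPQDefinable {V A D : Type} {r : ℕ} (G : DataGraph V A D)
    (S : Set (Fin r → V)) : Prop :=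
  ∃ Qs : List (CRDPQ A r), S = {t | ∃ Q ∈ Qs, t ∈ CRDPQEval G Q}

/-!
Fix a register for each data value of `w`, distinct values getting distinct registers. The REM
reads the letters of `w`; before each letter it stores the current value in its register, and after
it tests which of the registers filled so far contain the new value. These tests determine exactly
which positions carry equal values, and a data path with the same letters and the same coincidences
is automorphic to `w`: the automorphism is built letter by letter, correcting the current one by a
transposition whenever a fresh value is read.
-/

theorem exists_perm_eqOn_apply_eq_iff {α : Type*} (π : Equiv.Perm α) (s : Set α) (x y : α) :
    (∃ π' : Equiv.Perm α, Set.EqOn π' π s ∧ π' x = y) ↔ ∀ z ∈ s, (π z = y ↔ z = x) := by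
  classical
  constructor
  · rintro ⟨π', hπ', rfl⟩ z hz
    rw [← hπ' hz, π'.injective.eq_iff]
  · intro h
    refine ⟨π.trans (Equiv.swap (π x) y), fun z hz => ?_, by simp⟩
    by_cases hzx : z = x
    · subst hzx
      simp [(h z hz).2 rfl]
    · exact Equiv.swap_apply_of_ne_of_ne (π.injective.ne hzx) (mt (h z hz).1 hzx)

namespace DataPath

variable {A D : Type}

/-- The set of data values occurring in a data path. -/
def values (w : DataPath A D) : Set D :=
  {d : D | d = w.head ∨ ∃ p ∈ w.tail, p.2 = d}

theorem values_mk_cons (d d' : D) (a : A) (t : List (A × D)) :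
    values ⟨d, (a, d') :: t⟩ = insert d (values ⟨d', t⟩) := by
  ext x
  simp [values, eq_comm]

theorem values_finite (w : DataPath A D) : w.values.Finite := by
  obtain ⟨d, t⟩ := w
  induction t generalizing d with
  | nil => simp [values]
  | cons p t ih =>
    rw [values_mk_cons d p.2 p.1]
    exact (ih p.2).insert d

theorem exists_injOn_values {w : DataPath A D} {k : ℕ} (hk : w.values.ncard ≤ k) :
    ∃ reg : D → Fin k, Set.InjOn reg w.values := by
  have hpos : 0 < w.values.ncard := (Set.ncard_pos w.values_finite).2 ⟨w.head, .inl rfl⟩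
  have : Nonempty (Fin k) := ⟨⟨0, hpos.trans_le hk⟩⟩
  have hcard : w.values.encard ≤ (Set.univ : Set (Fin k)).encard := by
    rw [← w.values_finite.cast_ncard_eq]
    simpa using hk
  obtain ⟨reg, -, hreg⟩ := w.values_finite.exists_injOn_of_encard_le hcard
  exact ⟨reg, hreg⟩

end DataPath

section Satisfaction

variable {A D : Type} {k : ℕ} {σ σ' : Fin k → Option D}

theorem remSat_eps_iff {d : D} {t : List (A × D)} :
    REMSat .eps ⟨d, t⟩ σ σ' ↔ t = [] ∧ σ' = σ := by
  constructor
  · rintro ⟨⟩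
    exact ⟨rfl, rfl⟩
  · rintro ⟨rfl, rfl⟩
    exact .eps d _

theorem remSat_concat_iff {e₁ e₂ : REM A k} {w : DataPath A D} :
    REMSat (.concat e₁ e₂) w σ σ' ↔
      ∃ w₁ w₂ τ, w = w₁.comp w₂ ∧ w₁.lastVal = w₂.head ∧ REMSat e₁ w₁ σ τ ∧ REMSat e₂ w₂ τ σ' := by
  constructor
  · rintro (_ | _ | _ | _ | ⟨hw, h₁, h₂⟩)
    exact ⟨_, _, _, rfl, hw, h₁, h₂⟩
  · rintro ⟨w₁, w₂, τ, rfl, hw, h₁, h₂⟩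
    exact .concat hw h₁ h₂

theorem remSat_blockREM_iff {b : Block A k} {d : D} {t : List (A × D)} :
    REMSat (blockREM b) ⟨d, t⟩ σ σ' ↔
      ∃ d', t = [(b.2.1, d')] ∧ σ' = updReg σ b.1 d ∧ CondSat d' σ' b.2.2 := by
  constructor
  · rintro (_ | _ | _ | _ | _ | _ | _ | _ | htest)
    obtain _ | _ | _ | _ | _ | _ | _ | ⟨hletter, hc⟩ := htest
    cases hletter
    exact ⟨_, rfl, rfl, hc⟩
  · rintro ⟨d', rfl, rfl, hc⟩
    exact .bind (.test (.letter _ d d' _) hc)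

theorem remSat_basicREM_cons_iff {b : Block A k} {bs : List (Block A k)} {d : D}
    {t : List (A × D)} :
    REMSat (basicREM (b :: bs)) ⟨d, t⟩ σ σ' ↔
      ∃ d' t', t = (b.2.1, d') :: t' ∧ CondSat d' (updReg σ b.1 d) b.2.2 ∧
        REMSat (basicREM bs) ⟨d', t'⟩ (updReg σ b.1 d) σ' := by
  cases bs with
  | nil =>
    simp only [basicREM, remSat_blockREM_iff, remSat_eps_iff]
    constructor
    · rintro ⟨d', rfl, rfl, hc⟩
      exact ⟨d', [], rfl, hc, rfl, rfl⟩
    · rintro ⟨d', _, rfl, hc, rfl, rfl⟩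
      exact ⟨d', rfl, rfl, hc⟩
  | cons b' bs =>
    simp only [basicREM, remSat_concat_iff]
    constructor
    · rintro ⟨⟨d₁, t₁⟩, ⟨d₂, t₂⟩, τ, hw, hlast, hblock, hrest⟩
      obtain ⟨d', rfl, rfl, hc⟩ := remSat_blockREM_iff.1 hblock
      obtain ⟨rfl, rfl⟩ := DataPath.mk.inj hw
      obtain rfl : d' = d₂ := hlast
      exact ⟨d', t₂, rfl, hc, hrest⟩
    · rintro ⟨d', t', rfl, hc, hrest⟩
      exact ⟨⟨d, [(b.2.1, d')]⟩, ⟨d', t'⟩, _, rfl, rfl,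
        remSat_blockREM_iff.2 ⟨d', rfl, rfl, hc⟩, hrest⟩

end Satisfaction

/-- The condition that, among the registers `rs`, precisely `r` contains the current data value;
for `r ∉ rs` it says that none of them does. -/
def Cond.heldExactlyBy {k : ℕ} (rs : List (Fin k)) (r : Fin k) : Cond k :=
  rs.foldr (fun r' c => .conj (if r' = r then .eq r' else .ne r') c) .top

theorem condSat_heldExactlyBy_iff {D : Type} {k : ℕ} {d : D} {σ : Fin k → Option D}
    {rs : List (Fin k)} {r : Fin k} :
    CondSat d σ (.heldExactlyBy rs r) ↔ ∀ r' ∈ rs, (σ r' = some d ↔ r' = r) := by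
  induction rs with
  | nil => simp [Cond.heldExactlyBy, CondSat]
  | cons r' rs ih =>
    rw [List.forall_mem_cons, ← ih]
    by_cases hr : r' = r <;> simp [Cond.heldExactlyBy, CondSat, hr]

/-- The assignment `σ` contains, for every `x` in the list, the value `f x` in register
`reg x`. -/
def Stores {X D : Type} {k : ℕ} (reg : X → Fin k) (xs : List X) (f : X → D)
    (σ : Fin k → Option D) : Prop :=
  ∀ x ∈ xs, σ (reg x) = some (f x)

namespace Stores

variable {X D : Type} {k : ℕ} {reg : X → Fin k} {xs : List X} {f : X → D}
  {σ : Fin k → Option D}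

theorem congr {g : X → D} (h : Stores reg xs f σ) (hfg : Set.EqOn g f {x | x ∈ xs}) :
    Stores reg xs g σ :=
  fun x hx => (h x hx).trans (congrArg some (hfg hx).symm)

theorem updReg_cons {x : X} (h : Stores reg xs f σ) (hreg : Set.InjOn reg {y | y ∈ x :: xs}) :
    Stores reg (x :: xs) f (updReg σ [reg x] (f x)) := by
  intro y hy
  by_cases hyx : y = x
  · simp [updReg, hyx]
  · have hne : reg y ≠ reg x := hreg.ne hy List.mem_cons_self hyx
    simpa [updReg, hne] using h y ((List.mem_cons.1 hy).resolve_left hyx)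

theorem condSat_heldExactlyBy_iff {x : X} {d : D} (h : Stores reg xs f σ)
    (hreg : Set.InjOn reg {y | y ∈ x :: xs}) :
    CondSat d σ (.heldExactlyBy (xs.map reg) (reg x)) ↔ ∀ y ∈ xs, (f y = d ↔ y = x) := by
  rw [_root_.condSat_heldExactlyBy_iff, List.forall_mem_map]
  refine forall₂_congr fun y hy => ?_
  rw [h y hy, Option.some_inj, hreg.eq_iff (List.mem_cons_of_mem x hy) List.mem_cons_self]

end Stores

section Canonical

variable {A D : Type} {k : ℕ}

/-- The blocks of the canonical REM `e_[w]` of the data path `w = ⟨d, t⟩`, where `reg` assigns a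
register to each data value and `seen` lists the values already stored when `w` is read. -/
def canonicalBlocks (reg : D → Fin k) : List D → D → List (A × D) → List (Block A k)
  | _, _, [] => []
  | seen, d, (a, d') :: t =>
      ([reg d], a, .heldExactlyBy ((d :: seen).map reg) (reg d')) ::
        canonicalBlocks reg (d :: seen) d' t

theorem exists_remSat_canonicalBlocks_iff {reg : D → Fin k} {seen : List D} {d : D}
    {t t' : List (A × D)} {π : Equiv.Perm D} {σ : Fin k → Option D}
    (hreg : Set.InjOn reg ({x | x ∈ seen} ∪ DataPath.values ⟨d, t⟩))
    (hσ : Stores reg seen π σ) :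
    (∃ σ', REMSat (basicREM (canonicalBlocks reg seen d t)) ⟨π d, t'⟩ σ σ') ↔
      ∃ π' : Equiv.Perm D, Set.EqOn π' π {x | x ∈ d :: seen} ∧
        t' = t.map fun p => (p.1, π' p.2) := by
  induction t generalizing seen d t' π σ with
  | nil =>
    simp only [canonicalBlocks, basicREM, remSat_eps_iff, List.map_nil]
    exact ⟨fun ⟨_, h, _⟩ => ⟨π, Set.eqOn_refl _ _, h⟩, fun ⟨_, _, h⟩ => ⟨σ, h, rfl⟩⟩
  | cons p t ih =>
    obtain ⟨a, d'⟩ := p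
    have hregt : Set.InjOn reg ({x | x ∈ d :: seen} ∪ DataPath.values ⟨d', t⟩) := by
      convert hreg using 1
      ext x
      simp [DataPath.values_mk_cons, or_assoc]
    have hregd' : Set.InjOn reg {x | x ∈ d' :: d :: seen} :=
      hregt.mono fun x hx => (List.mem_cons.1 hx).elim (fun h => .inr (.inl h)) .inl
    have hτ : Stores reg (d :: seen) π (updReg σ [reg d] (π d)) :=
      hσ.updReg_cons (hregt.mono Set.subset_union_left)
    have test_iff (y : D) := (hτ.condSat_heldExactlyBy_iff (d := y) hregd').trans
      (exists_perm_eqOn_apply_eq_iff π {x | x ∈ d :: seen} d' y).symm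
    simp only [canonicalBlocks, remSat_basicREM_cons_iff, test_iff]
    constructor
    · rintro ⟨σ', _, s, rfl, ⟨π₁, hπ₁, rfl⟩, hsat⟩
      obtain ⟨π', hπ', rfl⟩ := (ih hregt (hτ.congr hπ₁)).1 ⟨σ', hsat⟩
      refine ⟨π', fun x hx => (hπ' (List.mem_cons_of_mem d' hx)).trans (hπ₁ hx), ?_⟩
      rw [List.map_cons, hπ' List.mem_cons_self]
    · rintro ⟨π', hπ', rfl⟩
      obtain ⟨σ', hsat⟩ := (ih hregt (hτ.congr hπ')).2 ⟨π', Set.eqOn_refl _ _, rfl⟩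
      exact ⟨σ', π' d', _, rfl, ⟨π', hπ', rfl⟩, hsat⟩

theorem remLang_canonicalBlocks {reg : D → Fin k} {w : DataPath A D}
    (hreg : Set.InjOn reg w.values) :
    REMLang (basicREM (canonicalBlocks reg [] w.head w.tail)) =
      {w' : DataPath A D | ∃ π : D ≃ D, w' = DataPath.dmap (⇑π) w} := by
  classical
  have hreg' : Set.InjOn reg ({x | x ∈ []} ∪ DataPath.values ⟨w.head, w.tail⟩) := by
    simpa using hreg
  have sat_iff (π : Equiv.Perm D) (t' : List (A × D)) :=
    exists_remSat_canonicalBlocks_iff (t' := t') (π := π) (σ := fun _ => none) hreg'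
      fun _ hx => absurd hx List.not_mem_nil
  ext ⟨d, t'⟩
  constructor
  · intro hsat
    obtain ⟨π, rfl⟩ : ∃ π : Equiv.Perm D, π w.head = d := ⟨Equiv.swap w.head d, by simp⟩
    obtain ⟨π', hπ', rfl⟩ := (sat_iff π t').1 hsat
    exact ⟨π', congrArg (DataPath.mk · _) (hπ' List.mem_cons_self).symm⟩
  · rintro ⟨π, hw⟩
    obtain ⟨rfl, rfl⟩ := DataPath.mk.inj hw
    exact (sat_iff π _).2 ⟨π, Set.eqOn_refl _ _, rfl⟩

theorem canonical_rem_exists_general (w : DataPath A D) (hk : w.values.ncard ≤ k) :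
    ∃ bs : List (Block A k),
      REMLang (basicREM bs) = {w' : DataPath A D | ∃ π : D ≃ D, w' = DataPath.dmap (⇑π) w} :=
  let ⟨_, hreg⟩ := DataPath.exists_injOn_values hk
  ⟨_, remLang_canonicalBlocks hreg⟩

end Canonical

/-- for every data path `w` with exactly `k` distinct data values
there is a `k`-REM whose language is exactly the set `[w]` of data paths
automorphic to `w`. -/
theorem canonical_rem_exists {A D : Type} [Fintype A] [Countable D] [Infinite D]
    (w : DataPath A D) (k : ℕ)
    (hk : {d : D | d = w.head ∨ ∃ p ∈ w.tail, p.2 = d}.ncard = k) :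
    ∃ e : REM A k,
      (REMLang e : Set (DataPath A D)) =
        {w' : DataPath A D | ∃ π : D ≃ D, w' = DataPath.dmap (⇑π) w} := by
  obtain ⟨bs, hbs⟩ := canonical_rem_exists_general w hk.le
  exact ⟨basicREM bs, hbs⟩
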